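/- Let r > 0 and let A ⊂ ℝ² be a nonempty r-ball body (i.e., A = X^r for some nonempty X ⊆ ℝ²) with A^r nonempty. Then ℋ¹(frontier A) + ℋ¹(frontier(A^r)) = 2πr. -/

import Mathlib

/-!
Write `B = A^r`. Since `A` is a ball body, also `A = B^r`. For each direction `dir θ` there is
exactly one pair `a θ ∈ A`, `b θ ∈ B` with `a θ - b θ = r • dir θ`: take for `a θ` the point of `A`
that is extreme in direction `dir θ`; that `a θ - r • dir θ` lies in `B` is `support_mem`. As `θ`
varies, `a θ` sweeps out `frontier A` and `b θ` sweeps out `frontier B`, because a frontier point of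
`A` is at distance exactly `r` from some point of `B`, and conversely (`frontier_ballBody`).

The inequalities `‖a θ - b φ‖ ≤ r` say that both `a` and `-b` are support curves
(`IsSupportCurve`): convex curves parametrised by the angle of the outer normal, with radius of
curvature at most `r`. Over an arc of normals of half-width `η` around `m`, such a curve `f` has all
its chords within angle `η` of the tangent direction `tdir m` (`chord`), so projecting to that
direction shows that the length of this piece lies between the increment of `⟪f, tdir m⟫` and that
increment divided by `cos η`. Pieces over different arcs overlap in a null set (`aedisjoint_arc`),
so the length of the whole curve is the sum of the lengths of `n` pieces with `η = π / n`.

Since `a + (-b) = r • dir`, the increments of the two curves add up to those of the circle of radius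
`r`, that is to `2 n r sin (π / n)` in total. Hence the sum of the two lengths is between
`2 n r sin (π / n)` and `2 n r tan (π / n)` for all `n ≥ 3`, and `n → ∞` gives `2 π r`
(`measure_range_add`).
-/

open MeasureTheory Metric Real

noncomputable section

/-- The `r`-ball body generated by a set `X ⊆ ℝ²`. -/
def ballBody (r : ℝ) (X : Set (EuclideanSpace ℝ (Fin 2))) :
    Set (EuclideanSpace ℝ (Fin 2)) :=
  ⋂ x ∈ X, closedBall x r

/-! ### Unit vectors in the plane -/

/-- The Euclidean plane. -/
abbrev Plane := EuclideanSpace ℝ (Fin 2)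

/-- The unit vector with polar angle `θ`. -/
def dir (θ : ℝ) : Plane := !₂[cos θ, sin θ]

/-- The unit vector `dir θ` rotated by a quarter turn. -/
def tdir (θ : ℝ) : Plane := !₂[-sin θ, cos θ]

lemma inner_dir (x : Plane) (θ : ℝ) : inner ℝ x (dir θ) = x 0 * cos θ + x 1 * sin θ := by
  simp [dir, PiLp.inner_apply, Fin.sum_univ_two]; ring

lemma inner_tdir (x : Plane) (θ : ℝ) : inner ℝ x (tdir θ) = x 1 * cos θ - x 0 * sin θ := by
  simp [tdir, PiLp.inner_apply, Fin.sum_univ_two]; ring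

lemma norm_sq_plane (x : Plane) : ‖x‖ ^ 2 = x 0 ^ 2 + x 1 ^ 2 := by
  simp [EuclideanSpace.norm_sq_eq, Fin.sum_univ_two]

lemma norm_dir (θ : ℝ) : ‖dir θ‖ = 1 := by
  have h : ‖dir θ‖ ^ 2 = 1 := by simp [norm_sq_plane, dir]
  nlinarith [norm_nonneg (dir θ)]

lemma norm_tdir (θ : ℝ) : ‖tdir θ‖ = 1 := by
  have h : ‖tdir θ‖ ^ 2 = 1 := by simp [norm_sq_plane, tdir]
  nlinarith [norm_nonneg (tdir θ)]

lemma continuous_dir : Continuous dir := by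
  unfold dir
  fun_prop

lemma dir_periodic : Function.Periodic dir (2 * π) := fun θ => by simp [dir]

lemma exists_dir {x : Plane} (hx : ‖x‖ = 1) : ∃ θ, x = dir θ := by
  have h := norm_sq_plane x
  have hz : ‖(⟨x 0, x 1⟩ : ℂ)‖ = 1 := by
    have := Complex.sq_norm (⟨x 0, x 1⟩ : ℂ)
    rw [Complex.normSq_apply] at this
    simp only at this
    nlinarith [norm_nonneg (⟨x 0, x 1⟩ : ℂ)]
  refine ⟨Complex.arg ⟨x 0, x 1⟩, ?_⟩
  have hne : (⟨x 0, x 1⟩ : ℂ) ≠ 0 := by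
    intro h0; rw [h0] at hz; simp at hz
  ext i
  fin_cases i
  · simp [dir, Complex.cos_arg hne, hz]
  · simp [dir, Complex.sin_arg, hz]

/-! ### Ball bodies -/

lemma mem_ballBody {r : ℝ} {X : Set Plane} {p : Plane} :
    p ∈ ballBody r X ↔ ∀ x ∈ X, dist p x ≤ r := by
  simp [ballBody]

lemma isCompact_ballBody {r : ℝ} {X : Set Plane} (hX : X.Nonempty) :
    IsCompact (ballBody r X) := by
  obtain ⟨x, hx⟩ := hX
  refine (isCompact_closedBall x r).of_isClosed_subset ?_ (Set.biInter_subset_of_mem hx)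
  exact isClosed_biInter fun _ _ => isClosed_closedBall

/-- A point of `B^r` is on the frontier exactly when it is on one of the generating circles. -/
lemma frontier_ballBody {r : ℝ} (hr : 0 < r) {B : Set Plane} (hB : IsCompact B)
    (hne : B.Nonempty) {p : Plane} :
    p ∈ frontier (ballBody r B) ↔ p ∈ ballBody r B ∧ ∃ b ∈ B, dist p b = r := by
  have hcl : IsClosed (ballBody r B) := (isCompact_ballBody hne).isClosed
  rw [hcl.frontier_eq]
  refine and_congr_right fun hp => ?_
  constructor
  · intro hpi
    obtain ⟨b, hb, hmax⟩ := hB.exists_isMaxOn hne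
      (f := fun x => dist p x) (by fun_prop)
    refine ⟨b, hb, le_antisymm (mem_ballBody.1 hp b hb) ?_⟩
    by_contra! hlt
    refine hpi (mem_interior_iff_mem_nhds.2 ?_)
    refine Filter.mem_of_superset (ball_mem_nhds p (sub_pos.2 hlt)) fun q hq => ?_
    refine mem_ballBody.2 fun x hx => ?_
    have h1 : dist p x ≤ dist p b := hmax hx
    have h2 : dist q p < r - dist p b := hq
    linarith [dist_triangle q p x]
  · rintro ⟨b, hb, hd⟩ hpi
    -- pushing `p` away from `b` leaves the disk around `b`
    have hcont : Filter.Tendsto (fun s : ℝ => p + s • (p - b)) (nhds 0) (nhds p) := by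
      have : Continuous (fun s : ℝ => p + s • (p - b)) := by fun_prop
      simpa using this.tendsto 0
    have hev := hcont (mem_interior_iff_mem_nhds.1 hpi)
    obtain ⟨ε, hε, hsub⟩ := Metric.mem_nhds_iff.1 hev
    have hmem : (ε / 2) ∈ ball (0 : ℝ) ε := by
      simp only [mem_ball, dist_zero_right, norm_eq_abs]
      rw [abs_of_pos (by linarith)]; linarith
    have h1 := mem_ballBody.1 (hsub hmem) b hb
    have h2 : p + (ε / 2) • (p - b) - b = (1 + ε / 2) • (p - b) := by
      module
    rw [dist_eq_norm, h2, norm_smul, ← dist_eq_norm, hd, norm_eq_abs,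
      abs_of_pos (by linarith)] at h1
    nlinarith

/-- A ball body lies in the disk of radius `r` that touches it at a support point:
if `p` maximises `⟪·, u⟫` on `A = B^r`, then `p - r • u ∈ A^r`. If some `q ∈ A` were outside that
disk, then for small `s` the point `p + s • (q - p) + s(1-s)μ • u`, for suitable `μ`,
would belong to `A` and be higher than `p` in direction `u`. -/
lemma support_mem {r : ℝ} (hr : 0 < r) {A B : Set Plane} (hA : A = ballBody r B) {p u : Plane}
    (hp : p ∈ A) (hu : ‖u‖ = 1) (hmax : ∀ q ∈ A, inner ℝ q u ≤ inner ℝ p u) :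
    p - r • u ∈ ballBody r A := by
  refine mem_ballBody.2 fun q hq => ?_
  by_contra! hlt
  set w := q - p with hw
  have hq' : q = p + w := by simp [hw]
  set h := inner ℝ w u with hh
  have hh0 : h ≤ 0 := by
    have := hmax q hq
    rw [hq', inner_add_left] at this
    linarith
  have huu : inner ℝ u u = (1 : ℝ) := by rw [real_inner_self_eq_norm_sq, hu]; norm_num
  have hbig : 0 < ‖w‖ ^ 2 + 2 * r * h := by
    have h1 : ‖w + r • u‖ ^ 2 = ‖w‖ ^ 2 + 2 * r * h + r ^ 2 := by
      rw [norm_add_sq_real, inner_smul_right, norm_smul, hu, norm_eq_abs, mul_one, sq_abs]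
      ring
    have h2 : dist (p - r • u) q = ‖w + r • u‖ := by
      rw [dist_comm, dist_eq_norm, hw]; congr 1; abel
    rw [h2] at hlt
    nlinarith
  -- `μ` is the midpoint of the interval `(-h, ‖w‖² / (2r))`
  obtain ⟨μ, hμ1, hμ2⟩ : ∃ μ, -h < μ ∧ 2 * r * μ < ‖w‖ ^ 2 := by
    refine ⟨(‖w‖ ^ 2 / (2 * r) - h) / 2, ?_, ?_⟩
    · have : -h < ‖w‖ ^ 2 / (2 * r) := by rw [lt_div_iff₀ (by positivity)]; nlinarith
      linarith
    · have : 2 * r * ((‖w‖ ^ 2 / (2 * r) - h) / 2) = (‖w‖ ^ 2 - 2 * r * h) / 2 := by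
        field_simp
      rw [this]; linarith
  have hμ0 : 0 < μ := by linarith
  obtain ⟨s, hs0, hs1, hs2, hs3⟩ : ∃ s : ℝ, 0 < s ∧ s < 1 ∧ s * μ < h + μ ∧
      s * μ ^ 2 ≤ ‖w‖ ^ 2 - 2 * r * μ := by
    have e1 : ∀ᶠ s : ℝ in nhdsWithin 0 (Set.Ioi 0), s < 1 :=
      nhdsWithin_le_nhds (Iio_mem_nhds one_pos)
    have e2 : ∀ᶠ s : ℝ in nhdsWithin 0 (Set.Ioi 0), s * μ < h + μ := by
      have : Continuous fun s : ℝ => s * μ := by fun_prop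
      exact nhdsWithin_le_nhds (this.tendsto 0 (Iio_mem_nhds (by linarith)))
    have e3 : ∀ᶠ s : ℝ in nhdsWithin 0 (Set.Ioi 0), s * μ ^ 2 < ‖w‖ ^ 2 - 2 * r * μ := by
      have : Continuous fun s : ℝ => s * μ ^ 2 := by fun_prop
      exact nhdsWithin_le_nhds (this.tendsto 0 (Iio_mem_nhds (by linarith)))
    obtain ⟨s, ⟨⟨h1, h2⟩, h3⟩, h4⟩ :=
      (((e1.and e2).and e3).and (self_mem_nhdsWithin)).exists
    exact ⟨s, h4, h1, h2, h3.le⟩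
  have hz : p + s • w + (s * (1 - s) * μ) • u ∈ A := by
    rw [hA, mem_ballBody]
    intro b hb
    have hpb := mem_ballBody.1 (hA ▸ hp) b hb
    have hqb := mem_ballBody.1 (hA ▸ hq) b hb
    rw [dist_eq_norm] at hpb hqb ⊢
    set x := p - b with hx
    have e1 : q - b = x + w := by rw [hq', hx]; abel
    have e2 : p + s • w + (s * (1 - s) * μ) • u - b = (x + s • w) + (s * (1 - s) * μ) • u := by
      rw [hx]; abel
    rw [e1] at hqb
    rw [e2]
    have f1 : ‖x + w‖ ^ 2 = ‖x‖ ^ 2 + 2 * inner ℝ x w + ‖w‖ ^ 2 := norm_add_sq_real x w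
    have f2 : ‖x + s • w‖ ^ 2 = ‖x‖ ^ 2 + 2 * (s * inner ℝ x w) + s ^ 2 * ‖w‖ ^ 2 := by
      rw [norm_add_sq_real, inner_smul_right, norm_smul, mul_pow, norm_eq_abs, sq_abs]
    have f3 : ‖(x + s • w) + (s * (1 - s) * μ) • u‖ ^ 2 = ‖x + s • w‖ ^ 2
        + 2 * (s * (1 - s) * μ * inner ℝ (x + s • w) u) + (s * (1 - s) * μ) ^ 2 := by
      rw [norm_add_sq_real, inner_smul_right, norm_smul, mul_pow, norm_eq_abs, sq_abs, hu]
      ring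
    have g1 : ‖x‖ ^ 2 ≤ r ^ 2 := pow_le_pow_left₀ (norm_nonneg _) hpb 2
    have g2 : ‖x + w‖ ^ 2 ≤ r ^ 2 := pow_le_pow_left₀ (norm_nonneg _) hqb 2
    have hss : 0 < s * (1 - s) := mul_pos hs0 (by linarith)
    have g3 : ‖x + s • w‖ ^ 2 ≤ r ^ 2 - s * (1 - s) * ‖w‖ ^ 2 := by
      have : ‖x + s • w‖ ^ 2 = (1 - s) * ‖x‖ ^ 2 + s * ‖x + w‖ ^ 2 - s * (1 - s) * ‖w‖ ^ 2 := by
        rw [f2, f1]; ring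
      rw [this]; nlinarith
    have g4 : ‖x + s • w‖ ≤ r := by
      refine abs_le_of_sq_le_sq' ?_ hr.le |>.2
      nlinarith [mul_nonneg hss.le (sq_nonneg ‖w‖)]
    have g5 : inner ℝ (x + s • w) u ≤ r := by
      refine (real_inner_le_norm _ _).trans ?_
      rw [hu, mul_one]; exact g4
    have g6 : s * (1 - s) * μ * inner ℝ (x + s • w) u ≤ s * (1 - s) * μ * r :=
      mul_le_mul_of_nonneg_left g5 (by positivity)
    have g7 : s * (1 - s) * (s * (1 - s) * μ ^ 2) ≤ s * (1 - s) * (‖w‖ ^ 2 - 2 * r * μ) := by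
      refine mul_le_mul_of_nonneg_left ?_ hss.le
      nlinarith [mul_nonneg (mul_nonneg hs0.le hs0.le) (sq_nonneg μ)]
    refine abs_le_of_sq_le_sq' ?_ hr.le |>.2
    rw [f3]
    nlinarith
  have := hmax _ hz
  rw [inner_add_left, inner_add_left, inner_smul_left, inner_smul_left, huu] at this
  simp only [conj_trivial] at this
  nlinarith

/-! ### Support curves -/

/-- `f` parametrises, by the angle of the outer normal, the boundary of a convex set which lies,
for each `φ`, in the disk of radius `r` touching it at `f φ` with outer normal `dir φ`. -/
def IsSupportCurve (r : ℝ) (f : ℝ → Plane) : Prop :=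
  ∀ θ φ, ‖f φ - f θ‖ ^ 2 ≤ 2 * r * inner ℝ (f φ - f θ) (dir φ)

namespace IsSupportCurve

variable {r : ℝ} {f : ℝ → Plane}

lemma norm_sub_le (hr : 0 < r) (hf : IsSupportCurve r f) (θ φ : ℝ) :
    ‖f φ - f θ‖ ≤ r * ‖dir φ - dir θ‖ := by
  have h1 := hf θ φ
  have h2 := hf φ θ
  have h3 : inner ℝ (f φ - f θ) (dir φ - dir θ) ≤ ‖f φ - f θ‖ * ‖dir φ - dir θ‖ :=
    real_inner_le_norm _ _
  rw [← neg_sub (f φ) (f θ), norm_neg, inner_neg_left] at h2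
  rw [inner_sub_right] at h3
  rcases (norm_nonneg (f φ - f θ)).eq_or_lt with h0 | h0
  · rw [← h0]; positivity
  · refine le_of_mul_le_mul_left ?_ h0
    nlinarith

lemma continuous (hr : 0 < r) (hf : IsSupportCurve r f) : Continuous f := by
  rw [continuous_iff_continuousAt]
  intro θ
  have h : Filter.Tendsto (fun φ => r * ‖dir φ - dir θ‖) (nhds θ) (nhds 0) := by
    have : Continuous fun φ => r * ‖dir φ - dir θ‖ := by
      have := continuous_dir
      fun_prop
    simpa using this.tendsto θ
  refine tendsto_iff_norm_sub_tendsto_zero.2 ?_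
  exact squeeze_zero (fun _ => norm_nonneg _) (fun φ => hf.norm_sub_le hr θ φ) h

lemma periodic (hr : 0 < r) (hf : IsSupportCurve r f) : Function.Periodic f (2 * π) := by
  intro θ
  have := hf.norm_sub_le hr θ (θ + 2 * π)
  rw [dir_periodic θ] at this
  simpa [sub_eq_zero] using this

lemma inner_nonneg (hr : 0 < r) (hf : IsSupportCurve r f) (θ φ : ℝ) :
    0 ≤ inner ℝ (f φ - f θ) (dir φ) := by
  have := hf θ φ
  have h2 : 0 ≤ 2 * r * inner ℝ (f φ - f θ) (dir φ) := (sq_nonneg _).trans this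
  exact nonneg_of_mul_nonneg_right h2 (by positivity)

/-- The fibres of a support curve are arcs: `dir e` is a nonnegative combination of `dir α` and
`dir β`, unless these are opposite, in which case the convex set has width zero and hence is a
point. -/
lemma eq_of_between (hf : IsSupportCurve r f) {α e β : ℝ} (h1 : α ≤ e) (h2 : e ≤ β)
    (h3 : β - α ≤ π) (hfe : f α = f β) : f e = f α := by
  have ha := hf e α
  have hb := hf e β
  have hc := hf α e
  rw [← hfe] at hb
  rw [← neg_sub (f e), norm_neg, inner_neg_left] at ha hb
  suffices h : ‖f e - f α‖ ^ 2 ≤ 0 by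
    have : ‖f e - f α‖ = 0 := by nlinarith [norm_nonneg (f e - f α)]
    simpa [sub_eq_zero] using this
  set d := f e - f α
  rw [inner_dir] at ha hb hc
  rcases h3.eq_or_lt with h3 | h3
  · obtain rfl : β = α + π := by linarith
    rw [cos_add_pi, sin_add_pi] at hb
    nlinarith
  · rcases h1.eq_or_lt with rfl | h1
    · nlinarith
    rcases h2.eq_or_lt with rfl | h2
    · nlinarith
    have s1 : 0 < sin (β - e) := sin_pos_of_pos_of_lt_pi (by linarith) (by linarith)
    have s2 : 0 < sin (e - α) := sin_pos_of_pos_of_lt_pi (by linarith) (by linarith)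
    have s3 : 0 < sin (β - α) := sin_pos_of_pos_of_lt_pi (by linarith) (by linarith)
    have key : ∀ x y : ℝ, sin (β - α) * (x * cos e + y * sin e)
        = sin (β - e) * (x * cos α + y * sin α) + sin (e - α) * (x * cos β + y * sin β) := by
      intro x y
      simp only [sin_sub]
      ring
    have k := key (d 0) (d 1)
    set N := ‖d‖ ^ 2
    by_contra! hN
    have i1 := mul_le_mul_of_nonneg_left ha s1.le
    have i2 := mul_le_mul_of_nonneg_left hb s2.le
    have i3 := mul_le_mul_of_nonneg_left hc s3.le
    have j1 := mul_pos s1 hN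
    have j2 := mul_pos s2 hN
    have j3 := mul_pos s3 hN
    have : 2 * r * (sin (β - α) * (d 0 * cos e + d 1 * sin e)) =
        2 * r * (sin (β - e) * (d 0 * cos α + d 1 * sin α)
          + sin (e - α) * (d 0 * cos β + d 1 * sin β)) := by rw [k]
    nlinarith

/-- On an arc of normals of half-width `η < π / 2`, the chords of a support curve make an angle at
most `η` with the tangent direction at the middle of the arc. -/
lemma chord (hr : 0 < r) (hf : IsSupportCurve r f) {m η α β : ℝ} (hη : η < π / 2)
    (hα : m - η ≤ α) (hαβ : α ≤ β) (hβ : β ≤ m + η) :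
    cos η * ‖f β - f α‖ ≤ inner ℝ (f β - f α) (tdir m) := by
  have h1 := hf.inner_nonneg hr α β
  have h2 := hf.inner_nonneg hr β α
  have hcη : 0 < cos η := cos_pos_of_mem_Ioo ⟨by linarith [pi_pos], hη⟩
  rcases hαβ.eq_or_lt with rfl | hlt
  · simp
  rw [← neg_sub (f β), inner_neg_left] at h2
  set d := f β - f α
  have hN := norm_sq_plane d
  rw [inner_dir] at h1 h2
  rw [inner_tdir]
  obtain ⟨y, hy⟩ : ∃ y, y = d 0 * cos m + d 1 * sin m := ⟨_, rfl⟩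
  obtain ⟨x, hx⟩ : ∃ x, x = d 1 * cos m - d 0 * sin m := ⟨_, rfl⟩
  have hm := sin_sq_add_cos_sq m
  have hd0 : d 0 = y * cos m - x * sin m := by
    rw [hx, hy]; linear_combination (-(d 0)) * hm
  have hd1 : d 1 = y * sin m + x * cos m := by
    rw [hx, hy]; linear_combination (-(d 1)) * hm
  have hN' : ‖d‖ ^ 2 = x ^ 2 + y ^ 2 := by
    rw [hN, hd0, hd1]; linear_combination (x ^ 2 + y ^ 2) * hm
  have hrot : ∀ φ, d 0 * cos φ + d 1 * sin φ = y * cos (φ - m) + x * sin (φ - m) := by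
    intro φ
    rw [cos_sub, sin_sub, hd0, hd1]; ring
  rw [hrot] at h1 h2
  rw [← hx]
  have cβ : cos η ≤ cos (β - m) := by
    rw [← cos_abs (β - m)]
    exact cos_le_cos_of_nonneg_of_le_pi (abs_nonneg _) (by linarith)
      (abs_le.2 ⟨by linarith, by linarith⟩)
  have cα : cos η ≤ cos (α - m) := by
    rw [← cos_abs (α - m)]
    exact cos_le_cos_of_nonneg_of_le_pi (abs_nonneg _) (by linarith)
      (abs_le.2 ⟨by linarith, by linarith⟩)
  have hs : 0 < sin (β - α) := sin_pos_of_pos_of_lt_pi (by linarith) (by linarith)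
  have hs' : sin (β - α) = sin (β - m) * cos (α - m) - cos (β - m) * sin (α - m) := by
    rw [← sin_sub]; congr 1; ring
  have hx0 : 0 ≤ x := by
    have : 0 ≤ x * sin (β - α) := by
      rw [hs']
      nlinarith [mul_nonneg h1 (hcη.le.trans cα), mul_nonneg h2 (hcη.le.trans cβ)]
    exact nonneg_of_mul_nonneg_left this hs
  have hy2 : y ^ 2 * cos η ^ 2 ≤ x ^ 2 * (1 - cos η ^ 2) := by
    rcases le_total 0 y with hy0 | hy0
    · have a1 : y * cos (α - m) ≤ x * (-sin (α - m)) := by linarith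
      have a2 := pow_le_pow_left₀ (mul_nonneg hy0 (hcη.le.trans cα)) a1 2
      have a3 := sin_sq_add_cos_sq (α - m)
      have a4 := pow_le_pow_left₀ hcη.le cα 2
      nlinarith [mul_le_mul_of_nonneg_left a4 (sq_nonneg x),
        mul_le_mul_of_nonneg_left a4 (sq_nonneg y)]
    · have a1 : (-y) * cos (β - m) ≤ x * sin (β - m) := by linarith
      have a2 := pow_le_pow_left₀ (mul_nonneg (neg_nonneg.2 hy0) (hcη.le.trans cβ)) a1 2
      have a3 := sin_sq_add_cos_sq (β - m)
      have a4 := pow_le_pow_left₀ hcη.le cβ 2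
      nlinarith [mul_le_mul_of_nonneg_left a4 (sq_nonneg x),
        mul_le_mul_of_nonneg_left a4 (sq_nonneg y)]
  refine abs_le_of_sq_le_sq' ?_ hx0 |>.2
  rw [mul_pow, hN']
  nlinarith

/-- The projection to the tangent line at the middle of the arc does not increase length. -/
lemma measure_arc_ge (hr : 0 < r) (hf : IsSupportCurve r f) {m η : ℝ} (hη0 : 0 ≤ η) :
    ENNReal.ofReal (inner ℝ (f (m + η) - f (m - η)) (tdir m)) ≤
      μH[1] (f '' Set.Icc (m - η) (m + η)) := by
  set I := Set.Icc (m - η) (m + η)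
  let g : Plane → ℝ := fun x => inner ℝ x (tdir m)
  have hg : LipschitzWith 1 g := by
    refine LipschitzWith.of_dist_le_mul fun x y => ?_
    rw [dist_eq_norm, dist_eq_norm, ← inner_sub_left]
    refine (norm_inner_le_norm _ _).trans ?_
    simp [norm_tdir]
  have hc : ContinuousOn (fun θ => g (f θ)) I :=
    (hg.continuous.comp (hf.continuous hr)).continuousOn
  have hsub : Set.Icc (g (f (m - η))) (g (f (m + η))) ⊆ g '' (f '' I) := by
    rw [Set.image_image]
    exact intermediate_value_Icc (by linarith) hc
  have h1 := hg.hausdorffMeasure_image_le zero_le_one (f '' I)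
  simp only [ENNReal.coe_one, ENNReal.one_rpow, one_mul] at h1
  refine le_trans ?_ h1
  rw [hausdorffMeasure_real]
  refine le_trans ?_ (measure_mono hsub)
  rw [Real.volume_Icc, inner_sub_left]

/-- By `chord`, the projection of the arc to the tangent line at its middle has an inverse that is
Lipschitz with constant `1 / cos η`. -/
lemma measure_arc_le (hr : 0 < r) (hf : IsSupportCurve r f) {m η : ℝ} (hη0 : 0 ≤ η)
    (hη : η < π / 2) :
    μH[1] (f '' Set.Icc (m - η) (m + η)) ≤
      ENNReal.ofReal (inner ℝ (f (m + η) - f (m - η)) (tdir m) / cos η) := by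
  have hcη : 0 < cos η := cos_pos_of_mem_Ioo ⟨by linarith [pi_pos], hη⟩
  set I := Set.Icc (m - η) (m + η) with hI
  let g : ℝ → ℝ := fun θ => inner ℝ (f θ) (tdir m)
  have hmono : MonotoneOn g I := by
    intro α hα β hβ hαβ
    have := hf.chord hr hη hα.1 hαβ hβ.2
    rw [inner_sub_left] at this
    have h0 : 0 ≤ cos η * ‖f β - f α‖ := by positivity
    simp only [g]; linarith
  have hanti : ∀ α ∈ I, ∀ β ∈ I, ‖f α - f β‖ ≤ (cos η)⁻¹ * |g α - g β| := by
    have key : ∀ α ∈ I, ∀ β ∈ I, α ≤ β → ‖f α - f β‖ ≤ (cos η)⁻¹ * |g α - g β| := by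
      intro α hα β hβ hαβ
      have := hf.chord hr hη hα.1 hαβ hβ.2
      rw [inner_sub_left] at this
      rw [inv_mul_eq_div, le_div_iff₀ hcη, norm_sub_rev, abs_sub_comm, mul_comm]
      exact this.trans (le_abs_self _)
    intro α hα β hβ
    rcases le_total α β with h | h
    · exact key α hα β hβ h
    · rw [norm_sub_rev, abs_sub_comm]; exact key β hβ α hα h
  -- `F` inverts the projection on the image of the arc
  let F : ℝ → Plane := fun y => f (Function.invFunOn g I y)
  have hinv : ∀ y ∈ g '' I, Function.invFunOn g I y ∈ I ∧ g (Function.invFunOn g I y) = y :=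
    fun y hy => Function.invFunOn_pos hy
  have hF : LipschitzOnWith (Real.toNNReal (cos η)⁻¹) F (g '' I) := by
    refine LipschitzOnWith.of_dist_le_mul fun y hy z hz => ?_
    have := hanti _ (hinv y hy).1 _ (hinv z hz).1
    rw [(hinv y hy).2, (hinv z hz).2] at this
    rw [dist_eq_norm, Real.dist_eq, Real.coe_toNNReal _ (inv_nonneg.2 hcη.le)]
    exact this
  have himg : f '' I ⊆ F '' (g '' I) := by
    rintro _ ⟨θ, hθ, rfl⟩
    refine ⟨g θ, ⟨θ, hθ, rfl⟩, ?_⟩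
    have hg := hinv (g θ) ⟨θ, hθ, rfl⟩
    have := hanti _ hg.1 _ hθ
    rw [hg.2] at this
    simpa [sub_eq_zero] using this
  have hle := hF.hausdorffMeasure_image_le (d := 1) zero_le_one
  rw [hausdorffMeasure_real, ENNReal.rpow_one] at hle
  have hsub : g '' I ⊆ Set.Icc (g (m - η)) (g (m + η)) := by
    rintro _ ⟨θ, hθ, rfl⟩
    exact ⟨hmono ⟨le_rfl, by linarith⟩ hθ hθ.1, hmono hθ ⟨by linarith, le_rfl⟩ hθ.2⟩
  calc μH[1] (f '' I) ≤ μH[1] (F '' (g '' I)) := measure_mono himg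
    _ ≤ _ := hle
    _ ≤ ENNReal.ofReal (cos η)⁻¹ * volume (Set.Icc (g (m - η)) (g (m + η))) := by
        gcongr
        exact le_rfl
    _ = _ := by
        rw [Real.volume_Icc, ← ENNReal.ofReal_mul (inv_nonneg.2 hcη.le), inv_mul_eq_div,
          inner_sub_left]

/-- The `k`-th of the arcs of half-width `η` that tile the line, starting at `-η`. -/
def arc (η : ℝ) (k : ℕ) : Set ℝ := Set.Icc (2 * η * k - η) (2 * η * k + η)

/-- When `η = π / n`, the first `n` arcs cover a full period. -/
lemma range_eq_iUnion (hr : 0 < r) (hf : IsSupportCurve r f) {η : ℝ} {n : ℕ} (hη0 : 0 < η)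
    (hn : η * n = π) : Set.range f = ⋃ k ∈ Finset.range n, f '' arc η k := by
  apply Set.Subset.antisymm
  · rintro _ ⟨θ, rfl⟩
    obtain ⟨y, ⟨hy0, hy1⟩, hy⟩ := (hf.periodic hr).exists_mem_Ico two_pi_pos θ (-η)
    rw [hy]
    have hnn : 0 ≤ (y + η) / (2 * η) := div_nonneg (by linarith) (by linarith)
    have h1 := Nat.floor_le hnn
    have h2 := Nat.lt_floor_add_one ((y + η) / (2 * η))
    rw [le_div_iff₀ (by linarith)] at h1
    rw [div_lt_iff₀ (by linarith)] at h2
    have hlt : ⌊(y + η) / (2 * η)⌋₊ < n := by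
      rw [Nat.floor_lt hnn, div_lt_iff₀ (by linarith)]
      nlinarith
    refine Set.mem_biUnion (Finset.mem_coe.2 (Finset.mem_range.2 hlt)) ⟨y, ⟨?_, ?_⟩, rfl⟩
    · nlinarith
    · nlinarith
  · refine Set.iUnion₂_subset fun k _ => ?_
    exact Set.image_subset_range _ _

/-- The images of two arcs overlap only in the images of end points. -/
lemma aedisjoint_arc (hr : 0 < r) (hf : IsSupportCurve r f) {η : ℝ} {n : ℕ} (hη0 : 0 < η)
    (hn : η * n = π) {i j : ℕ} (hij : i < j) (hj : j < n) :
    AEDisjoint μH[1] (f '' arc η i) (f '' arc η j) := by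
  have hnull : μH[1] ({f (2 * η * i + η), f (2 * η * j + η)} : Set Plane) = 0 := by
    have := Measure.nullSingletonClass_hausdorff Plane (d := 1) one_pos
    exact (Set.toFinite _).measure_zero _
  refine measure_mono_null ?_ hnull
  rintro p ⟨⟨α, ⟨hα1, hα2⟩, rfl⟩, ⟨β, ⟨hβ1, hβ2⟩, hβ⟩⟩
  have hij' : (i : ℝ) + 1 ≤ j := by exact_mod_cast hij
  have hj' : (j : ℝ) + 1 ≤ n := by exact_mod_cast hj
  have hi0 : (0 : ℝ) ≤ i := Nat.cast_nonneg i
  rcases le_total (β - α) π with h | h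
  · left
    refine (hf.eq_of_between hα2 ?_ h hβ.symm).symm
    nlinarith
  · right
    -- the complementary arc from `β` to `α + 2π` is the one of length at most `π`
    have hper := hf.periodic hr α
    have := hf.eq_of_between (α := β) (β := α + 2 * π) hβ2 (by nlinarith) (by linarith)
      (by rw [hper, hβ])
    rw [Set.mem_singleton_iff, this, hβ]

lemma measure_range (hr : 0 < r) (hf : IsSupportCurve r f) {η : ℝ} {n : ℕ} (hη0 : 0 < η)
    (hn : η * n = π) :
    μH[1] (Set.range f) = ∑ k ∈ Finset.range n, μH[1] (f '' arc η k) := by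
  rw [hf.range_eq_iUnion hr hη0 hn]
  refine measure_biUnion_finset₀ ?_ fun k _ => ?_
  · intro i hi j hj hij
    rcases lt_or_gt_of_ne hij with h | h
    · exact hf.aedisjoint_arc hr hη0 hn h (Finset.mem_range.1 hj)
    · exact (hf.aedisjoint_arc hr hη0 hn h (Finset.mem_range.1 hi)).symm
  · exact (isCompact_Icc.image (hf.continuous hr)).measurableSet.nullMeasurableSet

/-- The sum of the tangential increments of `f` over `n` arcs of half-width `η`. -/
def tangentialSum (f : ℝ → Plane) (η : ℝ) (n : ℕ) : ℝ :=
  ∑ k ∈ Finset.range n, inner ℝ (f (2 * η * k + η) - f (2 * η * k - η)) (tdir (2 * η * k))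

lemma increment_nonneg (hr : 0 < r) (hf : IsSupportCurve r f) {η : ℝ} (hη0 : 0 < η)
    (hη : η < π / 2) (m : ℝ) : 0 ≤ inner ℝ (f (m + η) - f (m - η)) (tdir m) := by
  have hcη : 0 < cos η := cos_pos_of_mem_Ioo ⟨by linarith [pi_pos], hη⟩
  exact le_trans (by positivity) (hf.chord hr hη le_rfl (by linarith) le_rfl)

lemma tangentialSum_nonneg (hr : 0 < r) (hf : IsSupportCurve r f) {η : ℝ} (hη0 : 0 < η)
    (hη : η < π / 2) (n : ℕ) : 0 ≤ tangentialSum f η n :=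
  Finset.sum_nonneg fun _ _ => hf.increment_nonneg hr hη0 hη _

lemma le_measure_range (hr : 0 < r) (hf : IsSupportCurve r f) {η : ℝ} {n : ℕ} (hη0 : 0 < η)
    (hη : η < π / 2) (hn : η * n = π) :
    ENNReal.ofReal (tangentialSum f η n) ≤ μH[1] (Set.range f) := by
  rw [hf.measure_range hr hη0 hn, tangentialSum,
    ENNReal.ofReal_sum_of_nonneg fun _ _ => hf.increment_nonneg hr hη0 hη _]
  exact Finset.sum_le_sum fun k _ => hf.measure_arc_ge hr hη0.le

lemma measure_range_le (hr : 0 < r) (hf : IsSupportCurve r f) {η : ℝ} {n : ℕ} (hη0 : 0 < η)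
    (hη : η < π / 2) (hn : η * n = π) :
    μH[1] (Set.range f) ≤ ENNReal.ofReal (tangentialSum f η n / cos η) := by
  have hcη : 0 < cos η := cos_pos_of_mem_Ioo ⟨by linarith [pi_pos], hη⟩
  rw [hf.measure_range hr hη0 hn, tangentialSum, Finset.sum_div,
    ENNReal.ofReal_sum_of_nonneg fun _ _ =>
      div_nonneg (hf.increment_nonneg hr hη0 hη _) hcη.le]
  exact Finset.sum_le_sum fun k _ => hf.measure_arc_le hr hη0.le hη

/-- If two support curves `f` and `g` have `f + g = r • dir`, their lengths add up to the
circumference of the circle of radius `r`. -/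
lemma measure_range_add (hr : 0 < r) {g : ℝ → Plane} (hf : IsSupportCurve r f)
    (hg : IsSupportCurve r g) (hfg : ∀ θ, f θ + g θ = r • dir θ) :
    μH[1] (Set.range f) + μH[1] (Set.range g) = ENNReal.ofReal (2 * π * r) := by
  have hsum : ∀ (η : ℝ) (n : ℕ),
      tangentialSum f η n + tangentialSum g η n = n * (2 * r * sin η) := by
    intro η n
    rw [tangentialSum, tangentialSum, ← Finset.sum_add_distrib, ← nsmul_eq_mul]
    rw [← Finset.card_range n, ← Finset.sum_const, Finset.card_range]
    refine Finset.sum_congr rfl fun k _ => ?_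
    rw [← inner_add_left]
    have : f (2 * η * k + η) - f (2 * η * k - η) + (g (2 * η * k + η) - g (2 * η * k - η))
        = r • (dir (2 * η * k + η) - dir (2 * η * k - η)) := by
      rw [smul_sub, ← hfg, ← hfg]; abel
    rw [this, inner_smul_left, inner_tdir]
    have h1 := sin_sq_add_cos_sq (2 * η * k)
    simp only [dir, conj_trivial, PiLp.sub_apply, Matrix.cons_val_zero,
      Matrix.cons_val_one, cos_add, cos_sub, sin_add, sin_sub]
    linear_combination (2 * r * sin η) * h1
  -- the angles `π / n` are less than `π / 2` from `n = 3` on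
  have hbounds : ∀ n : ℕ, 3 ≤ n → 0 < π / n ∧ π / n < π / 2 ∧ π / n * n = π := by
    intro n hn
    have hn' : (3 : ℝ) ≤ n := by exact_mod_cast hn
    refine ⟨by positivity, ?_, by field_simp⟩
    exact div_lt_div_of_pos_left pi_pos two_pos (by linarith)
  have hη : Filter.Tendsto (fun n : ℕ => π / n) Filter.atTop (nhds 0) :=
    tendsto_const_div_atTop_nhds_zero_nat π
  have hlim : Filter.Tendsto (fun n : ℕ => (n : ℝ) * (2 * r * sin (π / n))) Filter.atTop
      (nhds (2 * π * r)) := by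
    have hs : Filter.Tendsto (fun n : ℕ => sinc (π / n)) Filter.atTop (nhds 1) := by
      simpa [Function.comp_def] using (continuous_sinc.tendsto 0).comp hη
    have h2 : Filter.Tendsto (fun n : ℕ => 2 * π * r * sinc (π / n)) Filter.atTop
        (nhds (2 * π * r)) := by simpa using hs.const_mul (2 * π * r)
    refine h2.congr' ?_
    filter_upwards [Filter.eventually_ge_atTop 3] with n hn
    rw [sinc_of_ne_zero (hbounds n hn).1.ne']
    have : (n : ℝ) ≠ 0 := by positivity
    field_simp
  have hlim' : Filter.Tendsto (fun n : ℕ => (n : ℝ) * (2 * r * sin (π / n)) / cos (π / n))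
      Filter.atTop (nhds (2 * π * r)) := by
    have hc : Filter.Tendsto (fun n : ℕ => cos (π / n)) Filter.atTop (nhds 1) := by
      simpa [Function.comp_def] using (continuous_cos.tendsto 0).comp hη
    simpa [Pi.div_def] using hlim.div hc one_ne_zero
  apply le_antisymm
  · refine ge_of_tendsto (ENNReal.tendsto_ofReal hlim') ?_
    filter_upwards [Filter.eventually_ge_atTop 3] with n hn
    obtain ⟨h0, h1, h2⟩ := hbounds n hn
    have hc : 0 < cos (π / n) := cos_pos_of_mem_Ioo ⟨by linarith [pi_pos], h1⟩
    rw [← hsum, add_div, ENNReal.ofReal_add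
      (div_nonneg (hf.tangentialSum_nonneg hr h0 h1 n) hc.le)
      (div_nonneg (hg.tangentialSum_nonneg hr h0 h1 n) hc.le)]
    exact add_le_add (hf.measure_range_le hr h0 h1 h2) (hg.measure_range_le hr h0 h1 h2)
  · refine le_of_tendsto (ENNReal.tendsto_ofReal hlim) ?_
    filter_upwards [Filter.eventually_ge_atTop 3] with n hn
    obtain ⟨h0, h1, h2⟩ := hbounds n hn
    rw [← hsum, ENNReal.ofReal_add (hf.tangentialSum_nonneg hr h0 h1 n)
      (hg.tangentialSum_nonneg hr h0 h1 n)]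
    exact add_le_add (hf.le_measure_range hr h0 h1 h2) (hg.le_measure_range hr h0 h1 h2)

end IsSupportCurve

/-! ### The perimeter identity -/

/-- The condition that a point lies in the disk of radius `r` about the origin, rewritten for the
displacement `x` of that point from the boundary point `r • dir θ`. -/
lemma norm_sq_le_of_norm_add_le {r : ℝ} {x : Plane} {θ : ℝ} (h : ‖x + r • dir θ‖ ≤ r) :
    ‖x‖ ^ 2 ≤ 2 * r * inner ℝ (-x) (dir θ) := by
  have h2 := pow_le_pow_left₀ (norm_nonneg _) h 2
  rw [norm_add_sq_real, inner_smul_right, norm_smul, norm_dir, norm_eq_abs, mul_one, sq_abs] at h2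
  rw [inner_neg_left]
  linarith

/-- For a nonempty `r`-disk domain `A ⊆ ℝ²` with `A^r` nonempty, the perimeters of `A` and
`A^r` add up to `2πr`. -/
theorem perimeter_add_perimeter_rDiskDomain {r : ℝ} (hr : 0 < r)
    {X A : Set (EuclideanSpace ℝ (Fin 2))} (hX : X.Nonempty) (hA : A = ballBody r X)
    (hAne : A.Nonempty) (hArne : (ballBody r A).Nonempty) :
    μH[1] (frontier A) + μH[1] (frontier (ballBody r A)) = ENNReal.ofReal (2 * π * r) := by
  obtain ⟨B, hB⟩ : ∃ B, B = ballBody r A := ⟨_, rfl⟩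
  rw [← hB] at hArne ⊢
  have hdist : ∀ a ∈ A, ∀ b ∈ B, ‖a - b‖ ≤ r := by
    intro a ha b hb
    rw [← dist_eq_norm, dist_comm]
    exact mem_ballBody.1 (hB ▸ hb) a ha
  have hAB : A = ballBody r B := by
    apply Set.Subset.antisymm
    · intro a ha
      exact mem_ballBody.2 fun b hb => (dist_eq_norm a b).trans_le (hdist a ha b hb)
    · intro a ha
      rw [hA]
      refine mem_ballBody.2 fun x hx => mem_ballBody.1 ha x ?_
      rw [hB]
      refine mem_ballBody.2 fun y hy => ?_
      rw [dist_comm]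
      exact mem_ballBody.1 (hA ▸ hy) x hx
  have hAc : IsCompact A := hA ▸ isCompact_ballBody hX
  have hBc : IsCompact B := hB ▸ isCompact_ballBody hAne
  have hex : ∀ θ, ∃ a ∈ A, a - r • dir θ ∈ B := by
    intro θ
    obtain ⟨p, hp, hmax⟩ := hAc.exists_isMaxOn hAne
      (f := fun x => inner ℝ x (dir θ)) (by fun_prop)
    exact ⟨p, hp, hB ▸ support_mem hr hAB hp (norm_dir θ) fun q hq => hmax hq⟩
  choose a haA haB using hex
  -- the parallelogram law makes the pair `(a, b)` with `a - b = r • dir θ` unique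
  have huniq : ∀ p ∈ A, ∀ q ∈ B, ∀ θ, p - q = r • dir θ → p = a θ := by
    intro p hp q hq θ hpq
    have h1 := hdist p hp _ (haB θ)
    have h2 := hdist _ (haA θ) q hq
    have e1 : p - (a θ - r • dir θ) = (p - a θ) + r • dir θ := by abel
    have e2 : a θ - q = -(p - a θ) + r • dir θ := by rw [← hpq]; abel
    rw [e1] at h1
    rw [e2] at h2
    have k1 := norm_sq_le_of_norm_add_le h1
    have k2 := norm_sq_le_of_norm_add_le h2
    rw [norm_neg, neg_neg] at k2
    rw [inner_neg_left] at k1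
    have : ‖p - a θ‖ = 0 := by nlinarith [norm_nonneg (p - a θ)]
    simpa [sub_eq_zero] using this
  have hpair : ∀ p ∈ A, ∀ q ∈ B, ‖p - q‖ = r → ∃ θ, p - q = r • dir θ := by
    intro p _ q _ hpq
    obtain ⟨θ, hθ⟩ := exists_dir (x := r⁻¹ • (p - q)) (by
      rw [norm_smul, hpq, norm_inv, norm_eq_abs, abs_of_pos hr, inv_mul_cancel₀ hr.ne'])
    refine ⟨θ, ?_⟩
    rw [← hθ, smul_smul, mul_inv_cancel₀ hr.ne', one_smul]
  have hnorm : ∀ θ, ‖r • dir θ‖ = r := fun θ => by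
    rw [norm_smul, norm_dir, norm_eq_abs, abs_of_pos hr, mul_one]
  have hfA : frontier A = Set.range a := by
    ext p
    rw [hAB, frontier_ballBody hr hBc hArne, ← hAB]
    constructor
    · rintro ⟨hp, q, hq, hd⟩
      obtain ⟨θ, hθ⟩ := hpair p hp q hq (by rw [← dist_eq_norm, hd])
      exact ⟨θ, (huniq p hp q hq θ hθ).symm⟩
    · rintro ⟨θ, rfl⟩
      refine ⟨haA θ, _, haB θ, ?_⟩
      rw [dist_eq_norm, sub_sub_cancel, hnorm]
  have hfB : frontier B = Set.range fun θ => a θ - r • dir θ := by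
    ext q
    rw [hB, frontier_ballBody hr hAc hAne, ← hB]
    constructor
    · rintro ⟨hq, p, hp, hd⟩
      obtain ⟨θ, hθ⟩ := hpair p hp q hq (by rw [← dist_eq_norm, dist_comm, hd])
      refine ⟨θ, ?_⟩
      simp only [← huniq p hp q hq θ hθ, ← hθ, sub_sub_cancel]
    · rintro ⟨θ, rfl⟩
      refine ⟨haB θ, _, haA θ, ?_⟩
      rw [dist_comm, dist_eq_norm, sub_sub_cancel, hnorm]
  have hca : IsSupportCurve r a := by
    intro θ φ
    have h := hdist _ (haA θ) _ (haB φ)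
    have e : a θ - (a φ - r • dir φ) = (a θ - a φ) + r • dir φ := by abel
    rw [e] at h
    simpa [norm_sub_rev] using norm_sq_le_of_norm_add_le h
  have hcb : IsSupportCurve r fun θ => r • dir θ - a θ := by
    intro θ φ
    have h := hdist _ (haA φ) _ (haB θ)
    have e : a φ - (a θ - r • dir θ)
        = ((a φ - r • dir φ) - (a θ - r • dir θ)) + r • dir φ := by abel
    rw [e] at h
    have k := norm_sq_le_of_norm_add_le h
    have e2 : (r • dir φ - a φ) - (r • dir θ - a θ)
        = -((a φ - r • dir φ) - (a θ - r • dir θ)) := by abel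
    simp only [e2, norm_neg]
    exact k
  have hneg : μH[1] (frontier B) = μH[1] (Set.range fun θ => r • dir θ - a θ) := by
    have : (Set.range fun θ => r • dir θ - a θ) = IsometryEquiv.neg Plane '' frontier B := by
      rw [hfB, ← Set.range_comp]
      congr 1
      funext θ
      simp
    rw [this, IsometryEquiv.hausdorffMeasure_image]
  rw [hneg, hfA]
  exact IsSupportCurve.measure_range_add hr hca hcb fun θ => by abel
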